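/- arXiv:2510.24312 — 5 statements merged into one kernel-verified Lean document; each statement's English description precedes it below -/
import Mathlib

section
/- Let n and k be positive integers. The equation (n‼)^k − n^k = (k‼)^n − k^n holds if and only if k = n or (k,n) is one of (1,2), (2,1), (1,3), (3,1), (2,3), (3,2). -/
open Nat

/-!
The equation is symmetric in `n` and `k`, so let `k < n`. If `4 ≤ k`, then the left side is the
larger one: `n ^ k < k ^ n`, because `m ^ (1 / m)` decreases from `m = e` on, while
`k‼ ^ n ≤ n‼ ^ k`, because `m‼ ^ (1 / m)` increases. If `k ≤ 3 < n`, then `k‼ = k` makes the right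
side vanish and `n < n‼` makes the left side positive. If `n ≤ 3`, both sides vanish.

That `m‼ ^ (1 / m)` increases means `m‼ ≤ w ^ m` for the ratio `w = (m + 1)‼ / m‼`. The number
`(m + 2) / 2` separates the two sides: `m‼ ^ 2 ≤ ((m + 2) / 2) ^ m` and `(m + 2) / 2 ≤ w ^ 2`.
-/

theorem rpow_lt_rpow_swap {x y : ℝ} (hx : Real.exp 1 ≤ x) (hxy : x < y) : y ^ x < x ^ y := by
  have hx0 : 0 < x := (Real.exp_pos 1).trans_le hx
  have hy0 : 0 < y := hx0.trans hxy
  have one_le_log : 1 ≤ Real.log x := (Real.le_log_iff_exp_le hx0).2 hx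
  have log_div_lt : Real.log (y / x) < y / x - 1 :=
    Real.log_lt_sub_one_of_pos (div_pos hy0 hx0) ((one_lt_div hx0).2 hxy).ne'
  rw [Real.lt_rpow_iff_log_lt (Real.rpow_pos_of_pos hy0 x) hx0, Real.log_rpow hy0]
  calc x * Real.log y = x * Real.log x + x * Real.log (y / x) := by
        rw [Real.log_div hy0.ne' hx0.ne']; ring
    _ < x * Real.log x + x * (y / x - 1) := by gcongr
    _ = x * Real.log x + (y - x) * 1 := by field_simp
    _ ≤ x * Real.log x + (y - x) * Real.log x := by gcongr
    _ = y * Real.log x := by ring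

theorem two_rpow_mul_rpow_self_le {a x : ℝ} (ha : 0 ≤ a) (hax : a ≤ x) :
    2 ^ a * x ^ x ≤ (x + a) ^ x := by
  obtain rfl | ha := ha.eq_or_lt
  · simp
  have hx : 0 < x := ha.trans_le hax
  have bernoulli : 2 ≤ (1 + a / x) ^ (x / a) :=
    calc (2 : ℝ) = 1 + x / a * (a / x) := by field_simp; norm_num
      _ ≤ (1 + a / x) ^ (x / a) :=
        one_add_mul_self_le_rpow_one_add (by linarith [div_pos ha hx]) ((one_le_div ha).2 hax)
  calc 2 ^ a * x ^ x ≤ ((1 + a / x) ^ (x / a)) ^ a * x ^ x := by gcongr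
    _ = (1 + a / x) ^ x * x ^ x := by rw [← Real.rpow_mul (by positivity), div_mul_cancel₀ x ha.ne']
    _ = ((1 + a / x) * x) ^ x := (Real.mul_rpow (by positivity) hx.le).symm
    _ = (x + a) ^ x := by congr 1; field_simp

theorem pow_le_pow_of_forall_pow_succ_le {R : Type*} [Semiring R] [LinearOrder R]
    [IsStrictOrderedRing R] {f : ℕ → R} (hf₀ : ∀ m, 0 ≤ f m)
    (hf : ∀ m, f m ^ (m + 1) ≤ f (m + 1) ^ m) {k n : ℕ} (hkn : k ≤ n) : f k ^ n ≤ f n ^ k := by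
  induction n, hkn using Nat.le_induction with
  | base => exact le_rfl
  | succ n hkn ih =>
    obtain rfl | hn := eq_or_ne n 0
    · obtain rfl := Nat.le_zero.1 hkn
      exact hf 0
    refine (pow_le_pow_iff_left₀ (pow_nonneg (hf₀ _) _) (pow_nonneg (hf₀ _) _) hn).1 ?_
    calc (f k ^ (n + 1)) ^ n = (f k ^ n) ^ (n + 1) := pow_right_comm ..
      _ ≤ (f n ^ k) ^ (n + 1) := pow_le_pow_left₀ (pow_nonneg (hf₀ k) n) ih _
      _ = (f n ^ (n + 1)) ^ k := pow_right_comm ..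
      _ ≤ (f (n + 1) ^ n) ^ k := pow_le_pow_left₀ (pow_nonneg (hf₀ n) _) (hf n) k
      _ = (f (n + 1) ^ k) ^ n := pow_right_comm ..

theorem add_two_mul_doubleFactorial_sq_le (n : ℕ) :
    (n + 2) * n‼ ^ 2 ≤ 2 * (n + 1)‼ ^ 2 := by
  induction n using Nat.twoStepInduction with
  | zero => decide
  | one => decide
  | more n ih _ =>
    calc (n + 2 + 2) * (n + 2)‼ ^ 2 = (n + 4) * (n + 2) * ((n + 2) * n‼ ^ 2) := by
          rw [Nat.doubleFactorial_add_two]; ring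
      _ ≤ (n + 3) ^ 2 * (2 * (n + 1)‼ ^ 2) := Nat.mul_le_mul (by nlinarith) ih
      _ = 2 * (n + 2 + 1)‼ ^ 2 := by rw [Nat.doubleFactorial_add_two (n + 1)]; ring

theorem two_pow_mul_doubleFactorial_sq_le (n : ℕ) : 2 ^ n * n‼ ^ 2 ≤ (n + 2) ^ n := by
  induction n using Nat.twoStepInduction with
  | zero => decide
  | one => decide
  | more n ih _ =>
    have four_mul_pow_le : 2 ^ 2 * (n + 2) ^ (n + 2) ≤ (n + 2 + 2) ^ (n + 2) := by
      have h := two_rpow_mul_rpow_self_le (a := (2 : ℕ)) (x := (n + 2 : ℕ))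
        (Nat.cast_nonneg 2) (Nat.cast_le.2 (Nat.le_add_left 2 n))
      simp only [Real.rpow_natCast] at h
      exact_mod_cast h
    calc 2 ^ (n + 2) * (n + 2)‼ ^ 2 = 2 ^ 2 * (n + 2) ^ 2 * (2 ^ n * n‼ ^ 2) := by
          rw [Nat.doubleFactorial_add_two]; ring
      _ ≤ 2 ^ 2 * (n + 2) ^ 2 * (n + 2) ^ n := Nat.mul_le_mul_left _ ih
      _ = 2 ^ 2 * (n + 2) ^ (n + 2) := by ring
      _ ≤ (n + 2 + 2) ^ (n + 2) := four_mul_pow_le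

theorem doubleFactorial_pow_succ_le (n : ℕ) : n‼ ^ (n + 1) ≤ (n + 1)‼ ^ n := by
  suffices h : 2 ^ n * (n‼ ^ (n + 1)) ^ 2 ≤ 2 ^ n * ((n + 1)‼ ^ n) ^ 2 from
    (Nat.pow_le_pow_iff_left two_ne_zero).1 (Nat.le_of_mul_le_mul_left h (by positivity))
  calc 2 ^ n * (n‼ ^ (n + 1)) ^ 2 = 2 ^ n * n‼ ^ 2 * (n‼ ^ 2) ^ n := by ring
    _ ≤ (n + 2) ^ n * (n‼ ^ 2) ^ n :=
      Nat.mul_le_mul_right _ (two_pow_mul_doubleFactorial_sq_le n)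
    _ = ((n + 2) * n‼ ^ 2) ^ n := (mul_pow ..).symm
    _ ≤ (2 * (n + 1)‼ ^ 2) ^ n := Nat.pow_le_pow_left (add_two_mul_doubleFactorial_sq_le n) n
    _ = 2 ^ n * ((n + 1)‼ ^ n) ^ 2 := by ring

theorem doubleFactorial_pow_le {k n : ℕ} (hkn : k ≤ n) : k‼ ^ n ≤ n‼ ^ k :=
  pow_le_pow_of_forall_pow_succ_le (fun _ ↦ Nat.zero_le _) doubleFactorial_pow_succ_le hkn

theorem lt_doubleFactorial {n : ℕ} (hn : 4 ≤ n) : n < n‼ := by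
  obtain ⟨m, rfl⟩ := Nat.exists_eq_add_of_le' hn
  calc m + 4 < (m + 4) * (m + 2) := by nlinarith
    _ ≤ (m + 4) * ((m + 2) * m‼) :=
      Nat.mul_le_mul_left _ (Nat.le_mul_of_pos_right _ m.doubleFactorial_pos)

theorem doubleFactorial_eq_self {n : ℕ} (hn₀ : 0 < n) (hn : n ≤ 3) : n‼ = n := by
  interval_cases n <;> rfl

theorem doubleFactorial_sub_lt {k n : ℕ} (hk : 0 < k) (hkn : k < n) (hn : 4 ≤ n) :
    (k‼ : ℤ) ^ n - (k : ℤ) ^ n < (n‼ : ℤ) ^ k - (n : ℤ) ^ k := by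
  obtain hk3 | hk3 := le_or_gt k 3
  · have pow_lt : (n : ℤ) ^ k < (n‼ : ℤ) ^ k :=
      mod_cast Nat.pow_lt_pow_left (lt_doubleFactorial hn) hk.ne'
    rw [doubleFactorial_eq_self hk hk3, sub_self]
    exact sub_pos.2 pow_lt
  · have pow_le : (k‼ : ℤ) ^ n ≤ (n‼ : ℤ) ^ k := mod_cast doubleFactorial_pow_le hkn.le
    have exp_one_le : Real.exp 1 ≤ k :=
      Real.exp_one_lt_three.le.trans (mod_cast hk3.le)
    have pow_lt : (n : ℤ) ^ k < (k : ℤ) ^ n := by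
      have h := rpow_lt_rpow_swap exp_one_le (Nat.cast_lt.2 hkn)
      simp only [Real.rpow_natCast] at h
      exact_mod_cast h
    linarith

theorem doubleFactorial_sub_eq_iff_of_lt {k n : ℕ} (hk : 0 < k) (hkn : k < n) :
    (n‼ : ℤ) ^ k - (n : ℤ) ^ k = (k‼ : ℤ) ^ n - (k : ℤ) ^ n ↔ n ≤ 3 := by
  refine ⟨fun h ↦ ?_, fun hn ↦ ?_⟩
  · by_contra! hn
    exact (doubleFactorial_sub_lt hk hkn hn).ne' h
  · rw [doubleFactorial_eq_self hk (hkn.le.trans hn), doubleFactorial_eq_self (hk.trans hkn) hn,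
      sub_self, sub_self]

theorem doubleFactorial_sub_eq_iff (n k : ℕ) (hn : 0 < n) (hk : 0 < k) :
    ((n‼ : ℤ)) ^ k - (n : ℤ) ^ k = ((k‼ : ℤ)) ^ n - (k : ℤ) ^ n ↔
      k = n ∨ (k, n) = (1, 2) ∨ (k, n) = (2, 1) ∨ (k, n) = (1, 3) ∨ (k, n) = (3, 1) ∨
        (k, n) = (2, 3) ∨ (k, n) = (3, 2) := by
  simp only [Prod.mk.injEq]
  obtain hkn | rfl | hnk := lt_trichotomy k n
  · rw [doubleFactorial_sub_eq_iff_of_lt hk hkn]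
    omega
  · simp only [true_or]
  · rw [eq_comm, doubleFactorial_sub_eq_iff_of_lt hn hnk]
    omega
end

section
/- Let n and k be positive integers. The equation (n‼)^(k‼) + n^k = (k‼)^(n‼) + k^n holds if and only if k = n. -/
/-!
For `e ≤ a < b` one has `b ^ a < a ^ b`, and `n ↦ n‼` is strictly increasing on the positive
integers. So for `3 ≤ n < k` this inequality applies both to `(n, k)` and to `(n‼, k‼)`, and the
left side is strictly larger. For `n = 2` and `k ≥ 4` it still does, since `m ^ 2 ≤ 2 ^ m` for
`m ≥ 4`, with equality only at `m = 4`, while `k‼ > 4`. The cases `n = 1` and `(n, k) = (2, 3)` are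
immediate; there the right side is larger.
-/

open Nat

theorem rpow_lt_rpow_swap_of_exp_one_le {a b : ℝ} (ha : Real.exp 1 ≤ a) (hab : a < b) :
    b ^ a < a ^ b := by
  have ha₀ : 0 < a := (Real.exp_pos 1).trans_le ha
  have hdiff : 0 < b - a := sub_pos.2 hab
  have hratio : b / a < Real.exp ((b - a) / a) := by
    have h := Real.add_one_lt_exp (div_pos hdiff ha₀).ne'
    rwa [div_add_one ha₀.ne', sub_add_cancel] at h
  calc b ^ a = a ^ a * (b / a) ^ a := by
        rw [← Real.mul_rpow ha₀.le (div_pos (ha₀.trans hab) ha₀).le, mul_div_cancel₀ b ha₀.ne']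
    _ < a ^ a * Real.exp ((b - a) / a) ^ a := by
        gcongr
        exact div_nonneg (ha₀.trans hab).le ha₀.le
    _ = a ^ a * Real.exp 1 ^ (b - a) := by
        rw [← Real.exp_mul, div_mul_cancel₀ _ ha₀.ne', Real.exp_one_rpow]
    _ ≤ a ^ a * a ^ (b - a) := by gcongr
    _ = a ^ b := by rw [← Real.rpow_add ha₀, add_sub_cancel]

theorem pow_lt_pow_swap_of_three_le {a b : ℕ} (ha : 3 ≤ a) (hab : a < b) : b ^ a < a ^ b := by
  have hexp : Real.exp 1 ≤ a := Real.exp_one_lt_three.le.trans (by exact_mod_cast ha)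
  exact_mod_cast rpow_lt_rpow_swap_of_exp_one_le hexp (Nat.cast_lt.2 hab)

theorem sq_lt_two_pow {m : ℕ} (hm : 4 < m) : m ^ 2 < 2 ^ m := by
  refine lt_of_pow_lt_pow_left₀ 2 (zero_le _) ?_
  calc (m ^ 2) ^ 2 = m ^ 4 := by rw [← pow_mul]
    _ < 4 ^ m := pow_lt_pow_swap_of_three_le (by norm_num) hm
    _ = (2 ^ m) ^ 2 := by rw [pow_right_comm]; norm_num

theorem sq_le_two_pow {m : ℕ} (hm : 4 ≤ m) : m ^ 2 ≤ 2 ^ m := by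
  obtain rfl | hm := hm.eq_or_lt
  · rfl
  · exact (sq_lt_two_pow hm).le

theorem doubleFactorial_succ_lt_add_two (n : ℕ) : (n + 1)‼ < (n + 2)‼ := by
  induction n using Nat.twoStepInduction with
  | zero => decide
  | one => decide
  | more n ih _ => exact Nat.mul_lt_mul'' (Nat.lt_succ_self _) ih

theorem strictMonoOn_doubleFactorial : StrictMonoOn doubleFactorial (Set.Ici 1) := by
  refine strictMonoOn_of_lt_add_one Set.ordConnected_Ici fun n _ hn _ ↦ ?_
  obtain ⟨m, rfl⟩ := Nat.exists_eq_add_of_le' hn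
  exact doubleFactorial_succ_lt_add_two m

theorem le_doubleFactorial : ∀ n : ℕ, n ≤ n‼
  | 0 => zero_le_one
  | 1 => le_rfl
  | n + 2 => Nat.le_mul_of_pos_right _ n.doubleFactorial_pos

theorem doubleFactorial_pow_doubleFactorial_add_lt_of_three_le {n k : ℕ} (hn : 3 ≤ n)
    (hnk : n < k) : (k‼) ^ (n‼) + k ^ n < (n‼) ^ (k‼) + n ^ k := by
  have hlt : n‼ < k‼ :=
    strictMonoOn_doubleFactorial (Set.mem_Ici.2 (by omega)) (Set.mem_Ici.2 (by omega)) hnk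
  exact Nat.add_lt_add (pow_lt_pow_swap_of_three_le (hn.trans (le_doubleFactorial n)) hlt)
    (pow_lt_pow_swap_of_three_le hn hnk)

theorem doubleFactorial_sq_add_sq_lt {k : ℕ} (hk : 4 ≤ k) :
    (k‼) ^ 2 + k ^ 2 < 2 ^ (k‼) + 2 ^ k :=
  add_lt_add_of_lt_of_le (sq_lt_two_pow (hk.trans_lt (lt_doubleFactorial hk))) (sq_le_two_pow hk)

theorem doubleFactorial_pow_doubleFactorial_add_ne_of_lt {n k : ℕ} (hn : 0 < n) (hnk : n < k) :
    (n‼) ^ (k‼) + n ^ k ≠ (k‼) ^ (n‼) + k ^ n := by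
  obtain rfl | rfl | hn₃ : n = 1 ∨ n = 2 ∨ 3 ≤ n := by omega
  · have hk : k ≤ k‼ := le_doubleFactorial k
    simp only [doubleFactorial, one_pow, pow_one]
    omega
  · obtain rfl | hk₄ : k = 3 ∨ 4 ≤ k := by omega
    · decide
    · exact (doubleFactorial_sq_add_sq_lt hk₄).ne'
  · exact (doubleFactorial_pow_doubleFactorial_add_lt_of_three_le hn₃ hnk).ne'

theorem doubleFactorial_pow_doubleFactorial_add_eq_iff (n k : ℕ) (hn : 0 < n) (hk : 0 < k) :
    (n‼) ^ (k‼) + n ^ k = (k‼) ^ (n‼) + k ^ n ↔ k = n := by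
  refine ⟨fun h ↦ ?_, by rintro rfl; rfl⟩
  obtain hnk | rfl | hkn := lt_trichotomy n k
  · exact absurd h (doubleFactorial_pow_doubleFactorial_add_ne_of_lt hn hnk)
  · rfl
  · exact absurd h.symm (doubleFactorial_pow_doubleFactorial_add_ne_of_lt hk hkn)
end

section
/- Fix a non-zero integer b, positive integers A_1, ..., A_r, and a positive integer d with d > r. Then the set of tuples (n_1, ..., n_r, x) with each n_i a positive integer and x an integer satisfying b·(n_1‼)·A_1^(n_1)·(n_2‼)·A_2^(n_2)···(n_r‼)·A_r^(n_r) = x^d is finite. -/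
/-!
Put `m i = n i` if `n i` is odd and `m i = n i / 2` if `n i` is even, and let `M` be the
largest `m i`. By Bertrand's postulate there is a prime `p` with `M / 2 < p ≤ M`. If `p` is
odd, its exponent in `(n i)‼` is `m i / p ≤ 1`, with equality where `m i = M`, so its exponent
in `∏ i, (n i)‼` lies between `1` and `r < d`. The other factors of the left-hand side involve
only the primes dividing `b` or some `A i`. Once `M` is large, `p` is none of these, and its
exponent in `x ^ d` is then positive, less than `d` and a multiple of `d`, which is absurd.
Thus the `n i` are bounded, and each choice of them leaves finitely many `x`.
-/

open Nat

/-- The number up to which the odd primes dividing `n‼` extend: `n` itself for odd `n`, but only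
`n / 2` for even `n`, where `n‼ = 2 ^ (n / 2) * (n / 2)!`. -/
def oddScale (n : ℕ) : ℕ := if Even n then n / 2 else n

lemma oddScale_two_mul (k : ℕ) : oddScale (2 * k) = k := by
  simp [oddScale]

lemma oddScale_two_mul_add_one (k : ℕ) : oddScale (2 * k + 1) = 2 * k + 1 := by
  simp [oddScale]

lemma le_two_mul_oddScale (n : ℕ) : n ≤ 2 * oddScale n := by
  rcases Nat.even_or_odd' n with ⟨k, rfl | rfl⟩
  · rw [oddScale_two_mul]
  · rw [oddScale_two_mul_add_one]
    omega

section Factorization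

variable {p : ℕ}

lemma factorization_mul_apply_of_not_dvd {a : ℕ} (ha : ¬ p ∣ a) (m : ℕ) :
    (a * m).factorization p = m.factorization p := by
  obtain rfl | hm := eq_or_ne m 0
  · rw [mul_zero]
  · have ha₀ : a ≠ 0 := fun h ↦ ha (h ▸ dvd_zero p)
    rw [Nat.factorization_mul ha₀ hm, Finsupp.add_apply,
      Nat.factorization_eq_zero_of_not_dvd ha, zero_add]

lemma factorization_factorial_of_lt_sq (hp : p.Prime) {k : ℕ} (hk : k < p ^ 2) :
    (k !).factorization p = k / p := by
  rw [Nat.factorization_factorial hp (Nat.log_lt_of_lt_pow' two_ne_zero hk)]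
  simp

lemma factorization_doubleFactorial_two_mul (hp : p.Prime) (hp₂ : p ≠ 2) (k : ℕ) :
    ((2 * k)‼).factorization p = (k !).factorization p := by
  rw [Nat.doubleFactorial_two_mul, factorization_mul_apply_of_not_dvd]
  exact fun h ↦ hp₂ (Nat.prime_eq_prime_of_dvd_pow hp Nat.prime_two h)

/-- In the odd case `(2 * k + 1)! = (2 * k + 1)‼ * (2 * k)‼`, and `k < p` makes the second factor
prime to `p`. -/
lemma factorization_doubleFactorial_of_oddScale_lt (hp : p.Prime) (hp₂ : p ≠ 2) {n : ℕ}
    (hn : oddScale n < 2 * p) : (n‼).factorization p = oddScale n / p := by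
  have h_sq : oddScale n < p ^ 2 := hn.trans_le (by nlinarith [hp.two_le])
  rcases Nat.even_or_odd' n with ⟨k, rfl | rfl⟩
  · rw [oddScale_two_mul] at h_sq ⊢
    rw [factorization_doubleFactorial_two_mul hp hp₂, factorization_factorial_of_lt_sq hp h_sq]
  · rw [oddScale_two_mul_add_one] at hn h_sq ⊢
    have h_even : ¬ p ∣ (2 * k)‼ := by
      rw [Nat.doubleFactorial_two_mul, hp.dvd_mul, hp.dvd_factorial, not_or]
      exact ⟨fun h ↦ hp₂ (Nat.prime_eq_prime_of_dvd_pow hp Nat.prime_two h), by omega⟩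
    rw [← factorization_factorial_of_lt_sq hp h_sq, Nat.factorial_eq_mul_doubleFactorial,
      mul_comm (2 * k + 1)‼, factorization_mul_apply_of_not_dvd h_even]

lemma dvd_factorization_of_mul_eq_pow {c m x d : ℕ} (hc : ¬ p ∣ c)
    (h : c * m = x ^ d) : d ∣ m.factorization p := by
  rw [← factorization_mul_apply_of_not_dvd hc, h, Nat.factorization_pow]
  exact dvd_mul_right d _

end Factorization

lemma mul_prod_pow_mem_smoothNumbers {ι : Type*} (s : Finset ι) {b : ℕ} (hb : b ≠ 0) {A : ι → ℕ}
    (hA : ∀ i ∈ s, A i ≠ 0) (e : ι → ℕ) :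
    b * ∏ i ∈ s, A i ^ e i ∈ Nat.smoothNumbers (b * ∏ i ∈ s, A i + 1) := by
  rw [Nat.mem_smoothNumbers']
  intro p hp hdvd
  have hdvd' : p ∣ b * ∏ i ∈ s, A i := by
    rcases hp.dvd_mul.1 hdvd with h | h
    · exact h.mul_right _
    · obtain ⟨i, hi, hpi⟩ := (hp.prime.dvd_finsetProd_iff _).1 h
      exact ((hp.dvd_of_dvd_pow hpi).trans (Finset.dvd_prod_of_mem A hi)).mul_left b
  have h_ne : b * ∏ i ∈ s, A i ≠ 0 := mul_ne_zero hb (Finset.prod_ne_zero_iff.2 hA)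
  exact Nat.lt_succ_of_le (Nat.le_of_dvd (Nat.pos_of_ne_zero h_ne) hdvd')

section Product

variable {ι : Type*} [Fintype ι]

lemma exists_prime_factorization_prod_doubleFactorial {n : ι → ℕ} {N : ℕ} {i : ι}
    (hi : 4 * (N + 2) ≤ n i) :
    ∃ p, p.Prime ∧ N ≤ p ∧ 0 < (∏ j, (n j)‼).factorization p ∧
      (∏ j, (n j)‼).factorization p ≤ Fintype.card ι := by
  have : Nonempty ι := ⟨i⟩
  obtain ⟨k, hmax⟩ := Finite.exists_max fun j ↦ oddScale (n j)
  have h_large : 2 * (N + 2) ≤ oddScale (n k) := by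
    have := le_two_mul_oddScale (n i)
    have := hmax i
    omega
  obtain ⟨p, hp, h_half, hp_le⟩ :=
    Nat.exists_prime_lt_and_le_two_mul (oddScale (n k) / 2) (by omega)
  have h_lt (j) : oddScale (n j) < 2 * p := by
    have := hmax j
    omega
  have h_fact : (∏ j, (n j)‼).factorization p = ∑ j, oddScale (n j) / p := by
    rw [Nat.factorization_prod_apply fun j _ ↦ (Nat.doubleFactorial_pos _).ne']
    exact Finset.sum_congr rfl fun j _ ↦
      factorization_doubleFactorial_of_oddScale_lt hp (by omega) (h_lt j)
  refine ⟨p, hp, by omega, ?_, ?_⟩ <;> rw [h_fact]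
  · exact Finset.sum_pos' (fun _ _ ↦ Nat.zero_le _)
      ⟨k, Finset.mem_univ k, Nat.div_pos (by omega) hp.pos⟩
  · calc ∑ j, oddScale (n j) / p ≤ ∑ _j : ι, 1 :=
          Finset.sum_le_sum fun j _ ↦ Nat.lt_succ_iff.1 (Nat.div_lt_of_lt_mul (by
            have := h_lt j
            linarith))
      _ = Fintype.card ι := by simp

lemma lt_of_mul_prod_doubleFactorial_eq_pow {d : ℕ} (hd : Fintype.card ι < d) {N c x : ℕ}
    (hc : c ∈ Nat.smoothNumbers N) {n : ι → ℕ} (h : c * ∏ i, (n i)‼ = x ^ d) (i : ι) :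
    n i < 4 * (N + 2) := by
  by_contra! hi
  obtain ⟨p, hp, hNp, h_pos, h_le⟩ := exists_prime_factorization_prod_doubleFactorial hi
  have hpc : ¬ p ∣ c := fun hdvd ↦ (Nat.mem_smoothNumbers'.1 hc p hp hdvd).not_ge hNp
  have hd_le := Nat.le_of_dvd h_pos (dvd_factorization_of_mul_eq_pow hpc h)
  omega

theorem finite_solutions_doubleFactorial_pow_general {d : ℕ} (hd : Fintype.card ι < d) {N : ℕ}
    {c : (ι → ℕ) → ℤ} (hc : ∀ n, (c n).natAbs ∈ Nat.smoothNumbers N) :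
    {p : (ι → ℕ) × ℤ | c p.1 * ∏ i, ((p.1 i)‼ : ℤ) = p.2 ^ d}.Finite := by
  refine Set.Finite.of_finite_fibers Prod.fst ?_ ?_
  · refine (Set.Finite.pi' fun _ : ι ↦ Set.finite_Iio (4 * (N + 2))).subset ?_
    rintro _ ⟨⟨n, x⟩, h, rfl⟩ i
    have h_abs : (c n).natAbs * ∏ i, (n i)‼ = x.natAbs ^ d := by
      rw [← Int.natAbs_pow, ← Set.mem_ofPred.1 h, Int.natAbs_mul, ← Nat.cast_prod,
        Int.natAbs_natCast]
    exact lt_of_mul_prod_doubleFactorial_eq_pow hd (hc n) h_abs i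
  · intro n _
    refine ((Polynomial.nthRootsFinset d (c n * ∏ i, ((n i)‼ : ℤ))).finite_toSet.image
      (Prod.mk n)).subset ?_
    rintro ⟨_, x⟩ ⟨h, rfl⟩
    exact ⟨x, (Polynomial.mem_nthRootsFinset (by omega) _).2 h.symm, rfl⟩

end Product

theorem finite_solutions_doubleFactorial_pow (r : ℕ) (b : ℤ) (hb : b ≠ 0)
    (A : Fin r → ℕ) (hA : ∀ i, 0 < A i) (d : ℕ) (hd : r < d) :
    {p : (Fin r → ℕ) × ℤ | (∀ i, 0 < p.1 i) ∧
      b * ∏ i, (((p.1 i)‼ : ℤ) * (A i : ℤ) ^ (p.1 i)) = p.2 ^ d}.Finite := by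
  have h_smooth (n : Fin r → ℕ) : (b * ∏ i, (A i : ℤ) ^ n i).natAbs ∈
      Nat.smoothNumbers (b.natAbs * ∏ i, A i + 1) := by
    have h_abs : (b * ∏ i, (A i : ℤ) ^ n i).natAbs = b.natAbs * ∏ i, A i ^ n i := by
      rw [Int.natAbs_mul]
      norm_cast
    exact h_abs ▸ mul_prod_pow_mem_smoothNumbers Finset.univ (Int.natAbs_ne_zero.2 hb)
      (fun i _ ↦ (hA i).ne') n
  refine (finite_solutions_doubleFactorial_pow_general ((Fintype.card_fin r).trans_lt hd)
    h_smooth).subset ?_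
  rintro ⟨n, x⟩ ⟨-, h⟩
  rw [Set.mem_ofPred, ← h, Finset.prod_mul_distrib, mul_assoc,
    mul_comm (∏ i, (A i : ℤ) ^ n i)]
end

section
/- Fix a non-zero integer b, positive integers A_1, ..., A_r, and a positive integer d with d ≤ r. If b > 0, or if b < 0 and d is odd, then there are infinitely many tuples (n_1, ..., n_r, x) with each n_i a positive integer and x an integer satisfying b·(n_1‼)·A_1^(n_1)·(n_2‼)·A_2^(n_2)···(n_r‼)·A_r^(n_r) = x^d. If b < 0 and d is even, then this equation has no such solutions. -/
/-!
Choose `d` of the unknowns, give them a common value `N`, and raise one of them, with base `a`, to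
`N + 2`; all other unknowns are set to `2`. Since `(N + 2)‼ = (N + 2) * N‼`, the left-hand side is
`N‼ ^ d * (c * P ^ N * (N + 2))`, where `P` is the product of the `d` chosen bases and `c` is
`b * a ^ 2` times a positive integer, hence has the sign of `b`. So `c * P ^ N * (N + 2)` has to be
a `d`-th power for arbitrarily large `N`. Taking `N + 2 = d * (P ^ 2 * (c * d) ^ (d - 1) * t ^ d)`
achieves this: as `d ∣ N + 2`, the factor `P ^ (N + 2)` is a `d`-th power, and `(c * d) ^ (d - 1)`
completes `c * d` to one; the sign condition is what makes `(c * d) ^ (d - 1)` positive.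

For `b < 0` and `d` even the two sides have opposite signs.
-/

open Nat

lemma exists_gt_mul_pow_mul_add_two_eq_pow {c P : ℤ} {d : ℕ} (hc : c ≠ 0) (hP : P ≠ 0)
    (hd : 0 < d) (hsign : 0 < c ∨ Odd d) (K : ℕ) :
    ∃ (N : ℕ) (y : ℤ), K < N ∧ c * P ^ N * (N + 2) = y ^ d := by
  have hpow_pos : 0 < (c * d) ^ (d - 1) := by
    rcases hsign with hc_pos | hodd
    · positivity
    · exact (hodd.tsub_odd odd_one).pow_pos (by positivity)
  obtain ⟨u, hu⟩ : ∃ u : ℕ, P ^ 2 * (c * d) ^ (d - 1) = u :=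
    Int.eq_ofNat_of_zero_le (by positivity)
  have hu_pos : 0 < u := by
    rw [← Int.natCast_pos, ← hu]
    positivity
  set s := u * (K + 3) ^ d
  have hKs : K + 3 ≤ d * s :=
    calc K + 3 ≤ (K + 3) ^ d := Nat.le_self_pow hd.ne' _
      _ ≤ s := Nat.le_mul_of_pos_left _ hu_pos
      _ ≤ d * s := Nat.le_mul_of_pos_left _ hd
  obtain ⟨N, hN⟩ : ∃ N, N + 2 = d * s := ⟨d * s - 2, by omega⟩
  refine ⟨N, c * d * (K + 3) * P ^ s, by omega, ?_⟩
  have hN_cast : (N : ℤ) + 2 = d * (P ^ 2 * (c * d) ^ (d - 1) * (K + 3) ^ d) := by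
    rw [hu]
    exact_mod_cast hN
  calc c * P ^ N * (N + 2)
      = c * d * (c * d) ^ (d - 1) * (K + 3) ^ d * P ^ (N + 2) := by
        rw [hN_cast]
        ring
    _ = (c * d * (K + 3) * P ^ s) ^ d := by
        rw [hN, mul_pow_sub_one hd.ne', mul_pow _ (P ^ s), mul_pow _ (K + 3 : ℤ), ← pow_mul,
          mul_comm s d]

section DoubleFactorialProd

variable {ι R : Type*} [Fintype ι]

/-- The product `∏ i, (n i)‼ * A i ^ n i`, which the equation multiplies by `b` and compares with
a `d`-th power. The bases `A i` live in an arbitrary commutative semiring. -/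
def doubleFactorialProd [CommSemiring R] (A : ι → R) (n : ι → ℕ) : R :=
  ∏ i, ((n i)‼ : R) * A i ^ n i

lemma doubleFactorialProd_pos [CommSemiring R] [PartialOrder R] [IsStrictOrderedRing R]
    {A : ι → R} (hA : ∀ i, 0 < A i) (n : ι → ℕ) : 0 < doubleFactorialProd A n :=
  Finset.prod_pos fun i _ ↦
    mul_pos (Nat.cast_pos.2 (Nat.doubleFactorial_pos (n i))) (pow_pos (hA i) (n i))

lemma mul_doubleFactorialProd_ne_pow [CommRing R] [LinearOrder R] [IsStrictOrderedRing R]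
    {b : R} (hb : b < 0) {d : ℕ} (hd : Even d) {A : ι → R} (hA : ∀ i, 0 < A i)
    (n : ι → ℕ) (x : R) : b * doubleFactorialProd A n ≠ x ^ d :=
  ((mul_neg_of_neg_of_pos hb (doubleFactorialProd_pos hA n)).trans_le (hd.pow_nonneg x)).ne

variable [DecidableEq ι] [CommSemiring R]

lemma doubleFactorialProd_update_add_two (A : ι → R) (n : ι → ℕ) (z : ι) :
    doubleFactorialProd A (Function.update n z (n z + 2)) =
      (n z + 2) * A z ^ 2 * doubleFactorialProd A n := by
  have hz : z ∈ Finset.univ := Finset.mem_univ z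
  simp only [doubleFactorialProd,
    Function.apply_update (fun i m ↦ ((m‼ : ℕ) : R) * A i ^ m),
    Finset.prod_update_of_mem hz, Finset.prod_eq_mul_prod_sdiff_singleton_of_mem hz,
    Nat.doubleFactorial_add_two]
  push_cast
  ring

lemma doubleFactorialProd_piecewise_const (A : ι → R) (S : Finset ι) (k m : ℕ) :
    doubleFactorialProd A (S.piecewise (fun _ ↦ k) fun _ ↦ m) =
      (k‼ : R) ^ S.card * (∏ i ∈ S, A i) ^ k * ((m‼ : R) ^ Sᶜ.card * (∏ i ∈ Sᶜ, A i) ^ m) := by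
  have hprod_const (T : Finset ι) (l : ℕ) :
      ∏ i ∈ T, (l‼ : R) * A i ^ l = (l‼ : R) ^ T.card * (∏ i ∈ T, A i) ^ l := by
    rw [Finset.prod_mul_distrib, Finset.prod_const, Finset.prod_pow]
  rw [doubleFactorialProd, ← Finset.prod_mul_prod_compl S, ← hprod_const, ← hprod_const]
  congr 1 <;> refine Finset.prod_congr rfl fun i hi ↦ ?_
  · rw [Finset.piecewise_eq_of_mem _ _ _ hi]
  · rw [Finset.piecewise_eq_of_notMem _ _ _ (Finset.mem_compl.1 hi)]

end DoubleFactorialProd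

lemma exists_gt_mul_doubleFactorialProd_eq_pow {ι : Type*} [Fintype ι] {b : ℤ} (hb : b ≠ 0)
    {A : ι → ℤ} (hA : ∀ i, A i ≠ 0) {S : Finset ι} (hsign : 0 < b ∨ Odd S.card)
    {z : ι} (hz : z ∈ S) (K : ℕ) :
    ∃ (n : ι → ℕ) (x : ℤ), K < n z ∧ (∀ i, 0 < n i) ∧
      b * doubleFactorialProd A n = x ^ S.card := by
  classical
  set P := ∏ i ∈ S, A i
  have hP : P ≠ 0 := Finset.prod_ne_zero_iff.2 fun i _ ↦ hA i
  -- The value `2` outside `S` makes `q` positive whatever the signs of the bases.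
  set q : ℤ := (2‼ : ℤ) ^ Sᶜ.card * (∏ i ∈ Sᶜ, A i) ^ 2
  have hq_pos : 0 < A z ^ 2 * q := by
    have hcompl : ∏ i ∈ Sᶜ, A i ≠ 0 := Finset.prod_ne_zero_iff.2 fun i _ ↦ hA i
    have := hA z
    positivity
  obtain ⟨N, y, hKN, hy⟩ := exists_gt_mul_pow_mul_add_two_eq_pow
    (mul_ne_zero hb hq_pos.ne') hP (Finset.card_pos.2 ⟨z, hz⟩)
    (hsign.imp_left fun hb_pos ↦ mul_pos hb_pos hq_pos) K
  set n₀ : ι → ℕ := S.piecewise (fun _ ↦ N) fun _ ↦ 2 with hn₀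
  have hn₀z : n₀ z = N := Finset.piecewise_eq_of_mem _ _ _ hz
  have hn₀_pos (i : ι) : 0 < n₀ i := by
    by_cases hi : i ∈ S <;> simp [hn₀, hi, Nat.zero_lt_of_lt hKN]
  refine ⟨Function.update n₀ z (n₀ z + 2), N‼ * y, ?_, fun i ↦ ?_, ?_⟩
  · rw [Function.update_self]
    omega
  · rcases eq_or_ne i z with rfl | hi
    · simp
    · simpa [hi] using hn₀_pos i
  · rw [doubleFactorialProd_update_add_two, hn₀z, hn₀, doubleFactorialProd_piecewise_const,
      mul_pow, ← hy]
    ring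

theorem infinite_solutions_doubleFactorial_pow_general {ι : Type*} [Fintype ι] {b : ℤ}
    (hb : b ≠ 0) {A : ι → ℤ} (hA : ∀ i, A i ≠ 0) {d : ℕ} (hd : 0 < d)
    (hdι : d ≤ Fintype.card ι) :
    (0 < b ∨ Odd d →
      {p : (ι → ℕ) × ℤ | (∀ i, 0 < p.1 i) ∧ b * doubleFactorialProd A p.1 = p.2 ^ d}.Infinite) ∧
    (b < 0 → Even d → (∀ i, 0 < A i) →
      ∀ (n : ι → ℕ) (x : ℤ), b * doubleFactorialProd A n ≠ x ^ d) := by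
  refine ⟨fun hsign ↦ ?_, fun hb_neg heven ↦ mul_doubleFactorialProd_ne_pow hb_neg heven⟩
  obtain ⟨S, -, rfl⟩ := Finset.exists_subset_card_eq (s := Finset.univ) hdι
  obtain ⟨z, hz⟩ := Finset.card_pos.1 hd
  refine .of_image (fun p ↦ p.1 z) (Set.infinite_of_forall_exists_gt fun K ↦ ?_)
  obtain ⟨n, x, hK, hn, hx⟩ := exists_gt_mul_doubleFactorialProd_eq_pow hb hA hsign hz K
  exact ⟨n z, ⟨(n, x), ⟨hn, hx⟩, rfl⟩, hK⟩

theorem infinite_solutions_doubleFactorial_pow (r : ℕ) (b : ℤ) (hb : b ≠ 0)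
    (A : Fin r → ℕ) (hA : ∀ i, 0 < A i) (d : ℕ) (hd : 0 < d) (hdr : d ≤ r) :
    ((0 < b ∨ (b < 0 ∧ Odd d)) →
      {p : (Fin r → ℕ) × ℤ | (∀ i, 0 < p.1 i) ∧
        b * ∏ i, (((p.1 i)‼ : ℤ) * (A i : ℤ) ^ (p.1 i)) = p.2 ^ d}.Infinite) ∧
    (b < 0 → Even d →
      ∀ (n : Fin r → ℕ) (x : ℤ), (∀ i, 0 < n i) →
        b * ∏ i, (((n i)‼ : ℤ) * (A i : ℤ) ^ (n i)) ≠ x ^ d) := by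
  have hA_pos (i : Fin r) : (0 : ℤ) < A i := Nat.cast_pos.2 (hA i)
  obtain ⟨hinf, hne⟩ := infinite_solutions_doubleFactorial_pow_general hb
    (fun i ↦ (hA_pos i).ne') hd (by rwa [Fintype.card_fin])
  exact ⟨fun h ↦ hinf (h.imp_right And.right),
    fun hb_neg heven n x _ ↦ hne hb_neg heven hA_pos n x⟩
end

section
/- Assume the ABC conjecture: for every ε > 0 there is a constant K(ε) > 0 such that whenever A, B, C are pairwise coprime non-zero integers with A + B = C, then max{|A|,|B|,|C|} < K(ε)·rad(|A·B·C|)^(1+ε), where rad(m) denotes the product of the distinct primes dividing m. Let f ∈ ℚ[x] be a polynomial of degree d ≥ 2 which is not a monomial and has at least two distinct roots, let b be a non-zero integer, and let A_1, ..., A_r be positive integers. Then there are only finitely many tuples (n_1, ..., n_r, x) with each n_i a positive integer and x an integer satisfying b·(n_1‼)·A_1^(n_1)···(n_r‼)·A_r^(n_r) = f(x). -/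
/-!
A Tschirnhaus substitution turns `f` into `F = a X ^ d + Q` with `deg Q ≤ d - 2` and `Q ≠ 0`, the
latter because `f` has two distinct roots. The abc bound with `ε = 1 / d`, applied to
`a y ^ d + Q(y) = F(y)`, reads `|y| ^ (d ^ 2) = O((|y| ^ (d - 1) * rad F(y)) ^ (d + 1))`, so one
power of `|y|` survives and `|f(x)|` is bounded polynomially in `rad f(x)`.

If `f(x)` is the given product and `m` is the largest `n_i`, then `rad f(x) = O(4 ^ m)`, since only
the primes up to `m` and those dividing the constants occur, while `m‼` divides `f(x)` and outgrows
every exponential because `m ! ≤ (m‼) ^ 2`. Hence `m` is bounded, and each value of `f` is attained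
finitely often.
-/

open Nat Polynomial

/-- The radical of a natural number: the product of its distinct prime divisors. -/
def rad (m : ℕ) : ℕ := ∏ p ∈ m.primeFactors, p

theorem doubleFactorial_le_doubleFactorial_succ : ∀ n : ℕ, n‼ ≤ (n + 1)‼
  | 0 => by simp
  | 1 => by decide
  | n + 2 => Nat.mul_le_mul (Nat.le_succ _) (doubleFactorial_le_doubleFactorial_succ n)

theorem factorial_le_doubleFactorial_sq : ∀ n : ℕ, n ! ≤ n‼ ^ 2
  | 0 => by simp
  | n + 1 => by
    rw [Nat.factorial_eq_mul_doubleFactorial, sq]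
    gcongr
    exact doubleFactorial_le_doubleFactorial_succ n

open Filter in
theorem eventually_mul_pow_lt_doubleFactorial (K L : ℝ) :
    ∀ᶠ n : ℕ in atTop, K * L ^ n < n‼ := by
  have hlim : Tendsto (fun n : ℕ ↦ K ^ 2 * ((L ^ 2) ^ n / n !)) atTop (nhds 0) := by
    simpa using (FloorSemiring.tendsto_pow_div_factorial_atTop (L ^ 2)).const_mul (K ^ 2)
  filter_upwards [hlim.eventually_lt_const one_pos] with n hn
  refine lt_of_pow_lt_pow_left₀ 2 (by positivity) ?_
  calc
    (K * L ^ n) ^ 2 = K ^ 2 * (L ^ 2) ^ n := by ring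
    _ < (n ! : ℝ) := by rwa [← mul_div_assoc, div_lt_one (by positivity)] at hn
    _ ≤ (n‼ : ℝ) ^ 2 := by exact_mod_cast factorial_le_doubleFactorial_sq n

theorem doubleFactorial_sup_dvd_prod {ι : Type*} (s : Finset ι) (n : ι → ℕ) :
    (s.sup n)‼ ∣ ∏ i ∈ s, (n i)‼ := by
  rcases s.eq_empty_or_nonempty with rfl | hs
  · simp
  · obtain ⟨i, hi, hsup⟩ := s.exists_mem_eq_sup hs n
    exact hsup ▸ Finset.dvd_prod_of_mem (fun i ↦ (n i)‼) hi

theorem le_mul_pow_of_mul_pow_pow_le {a y c K ρ : ℝ} {k : ℕ} (ha : 0 < a) (hy : 0 < y)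
    (h : (a * y ^ (k + 2)) ^ (k + 2) ≤ K * (a * y * (c * y ^ k) * ρ) ^ (k + 3)) :
    y ≤ K * a * c ^ (k + 3) * ρ ^ (k + 3) := by
  -- The left side of `h` has `y`-exponent `(k + 2) ^ 2 = (k + 1) * (k + 3) + 1`.
  have hfactor : 0 < a ^ (k + 2) * y ^ ((k + 1) * (k + 3)) := by positivity
  refine le_of_mul_le_mul_left ?_ hfactor
  calc
    a ^ (k + 2) * y ^ ((k + 1) * (k + 3)) * y = (a * y ^ (k + 2)) ^ (k + 2) := by ring
    _ ≤ K * (a * y * (c * y ^ k) * ρ) ^ (k + 3) := h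
    _ = a ^ (k + 2) * y ^ ((k + 1) * (k + 3)) * (K * a * c ^ (k + 3) * ρ ^ (k + 3)) := by ring

section Polynomial

theorem nextCoeff_scaleRoots {R : Type*} [Semiring R] (f : R[X]) (s : R) :
    (f.scaleRoots s).nextCoeff = f.nextCoeff * s := by
  rcases f.natDegree.eq_zero_or_pos with h | h
  · simp [nextCoeff, h]
  · rw [nextCoeff_of_natDegree_pos (by rwa [natDegree_scaleRoots]),
      nextCoeff_of_natDegree_pos h, coeff_scaleRoots, natDegree_scaleRoots, Nat.sub_sub_self h,
      pow_one]

theorem nextCoeff_taylor {R : Type*} [CommSemiring R] (f : R[X]) (r : R) :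
    (taylor r f).nextCoeff = f.nextCoeff + f.natDegree * f.leadingCoeff * r := by
  rcases hn : f.natDegree with _ | n
  · simp [nextCoeff, hn]
  have hdeg : (hasseDeriv n f).natDegree ≤ 1 :=
    (natDegree_hasseDeriv_le f n).trans (by omega)
  rw [nextCoeff_of_natDegree_pos (by rw [natDegree_taylor]; omega),
    nextCoeff_of_natDegree_pos (by omega), natDegree_taylor, hn, Nat.add_sub_cancel, taylor_coeff,
    eq_X_add_C_of_natDegree_le_one hdeg]
  simp [hasseDeriv_coeff, leadingCoeff, hn, add_comm]

theorem leadingCoeff_mul_pow_add_eval_eraseLead {R : Type*} [Semiring R] (f : R[X]) (y : R) :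
    f.leadingCoeff * y ^ f.natDegree + f.eraseLead.eval y = f.eval y := by
  conv_rhs => rw [← f.eraseLead_add_C_mul_X_pow]
  rw [eval_add, eval_C_mul, eval_X_pow, add_comm]

theorem exists_abs_eval_le_mul_pow {R : Type*} [Ring R] [LinearOrder R] [IsStrictOrderedRing R]
    (f : R[X]) {k : ℕ} (hk : f.natDegree ≤ k) :
    ∃ c : R, 0 < c ∧ ∀ y t : R, |y| ≤ t → 1 ≤ t → |f.eval y| ≤ c * t ^ k := by
  have hnonneg : 0 ≤ ∑ i ∈ Finset.range (f.natDegree + 1), |f.coeff i| :=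
    Finset.sum_nonneg fun _ _ ↦ abs_nonneg _
  refine ⟨_, add_pos_of_nonneg_of_pos hnonneg one_pos, fun y t hyt ht ↦ ?_⟩
  calc
    |f.eval y| ≤ ∑ i ∈ Finset.range (f.natDegree + 1), |f.coeff i * y ^ i| := by
      rw [eval_eq_sum_range]
      exact Finset.abs_sum_le_sum_abs _ _
    _ ≤ ∑ i ∈ Finset.range (f.natDegree + 1), |f.coeff i| * t ^ k := by
      refine Finset.sum_le_sum fun i hi ↦ ?_
      have hik : i ≤ k := (Finset.mem_range_succ_iff.1 hi).trans hk
      rw [abs_mul, abs_pow]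
      gcongr
      exact (pow_le_pow_left₀ (abs_nonneg y) hyt i).trans (pow_le_pow_right₀ ht hik)
    _ = (∑ i ∈ Finset.range (f.natDegree + 1), |f.coeff i|) * t ^ k := (Finset.sum_mul _ _ _).symm
    _ ≤ (∑ i ∈ Finset.range (f.natDegree + 1), |f.coeff i| + 1) * t ^ k := by
      gcongr
      exact le_add_of_nonneg_right zero_le_one

variable {R S : Type*} [CommRing R]

/-- The Tschirnhaus transform of `f`, which has no term of next-to-leading degree. It is scaled so
that no denominators occur: for `f = a X ^ n + c X ^ (n - 1) + ⋯`, its roots are `n * a * z + c`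
for the roots `z` of `f`. -/
noncomputable def tschirnhaus (f : R[X]) : R[X] :=
  taylor (-f.nextCoeff) (f.scaleRoots (f.natDegree * f.leadingCoeff))

theorem natDegree_tschirnhaus (f : R[X]) : (tschirnhaus f).natDegree = f.natDegree := by
  rw [tschirnhaus, natDegree_taylor, natDegree_scaleRoots]

theorem nextCoeff_tschirnhaus (f : R[X]) : (tschirnhaus f).nextCoeff = 0 := by
  rw [tschirnhaus, nextCoeff_taylor, nextCoeff_scaleRoots, natDegree_scaleRoots,
    leadingCoeff_scaleRoots]
  ring

theorem aeval_tschirnhaus [CommRing S] [Algebra R S] (f : R[X]) (t : S) :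
    aeval (algebraMap R S (f.natDegree * f.leadingCoeff) * t + algebraMap R S f.nextCoeff)
      (tschirnhaus f) =
      algebraMap R S (f.natDegree * f.leadingCoeff) ^ f.natDegree * aeval t f := by
  rw [tschirnhaus, taylor_apply, aeval_comp, map_add, aeval_X, aeval_C, map_neg,
    add_neg_cancel_right]
  exact scaleRoots_eval₂_mul _ _ _

theorem eraseLead_ne_zero_of_aeval_eq_zero [CommRing S] [IsDomain S] [Algebra R S]
    [FaithfulSMul R S] {f : R[X]} (hf : f ≠ 0) {z w : S} (hzw : z ≠ w) (hz : aeval z f = 0)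
    (hw : aeval w f = 0) : f.eraseLead ≠ 0 := by
  intro h
  have hmonomial : f = C f.leadingCoeff * X ^ f.natDegree := by
    simpa [h] using f.eraseLead_add_C_mul_X_pow.symm
  have root_eq_zero (t : S) (ht : aeval t f = 0) : t = 0 := by
    rw [hmonomial, map_mul, aeval_C, map_pow, aeval_X] at ht
    refine eq_zero_of_pow_eq_zero ((mul_eq_zero.1 ht).resolve_left ?_)
    simpa using hf
  exact hzw ((root_eq_zero z hz).trans (root_eq_zero w hw).symm)

theorem eraseLead_tschirnhaus_ne_zero [IsDomain R] [CharZero R] [CommRing S] [IsDomain S]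
    [Algebra R S] [FaithfulSMul R S] {f : R[X]} (hf : f ≠ 0) {z w : S} (hzw : z ≠ w)
    (hz : aeval z f = 0) (hw : aeval w f = 0) : (tschirnhaus f).eraseLead ≠ 0 := by
  have hdeg : 0 < f.natDegree :=
    natDegree_pos_of_aeval_root hf hz fun x hx ↦ by simpa using hx
  have hscale : algebraMap R S (f.natDegree * f.leadingCoeff) ≠ 0 :=
    (map_ne_zero_iff _ (FaithfulSMul.algebraMap_injective R S)).2 (by simp [hdeg.ne', hf])
  refine eraseLead_ne_zero_of_aeval_eq_zero ?_ (fun h ↦ hzw (mul_left_cancel₀ hscale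
    (add_right_cancel h))) ((aeval_tschirnhaus f z).trans ?_) ((aeval_tschirnhaus f w).trans ?_)
  · exact ne_zero_of_natDegree_gt (n := 0) (by rwa [natDegree_tschirnhaus])
  · rw [hz, mul_zero]
  · rw [hw, mul_zero]

theorem finite_setOf_eval_eq [IsDomain R] {f : R[X]} (hf : 0 < f.natDegree) (v : R) :
    {x | f.eval x = v}.Finite := by
  have hfv : f - C v ≠ 0 := ne_zero_of_natDegree_gt (n := 0) (by rwa [natDegree_sub_C])
  simpa [IsRoot.def, sub_eq_zero] using finite_setOfPred_isRoot hfv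

end Polynomial

section Radical

open UniqueFactorizationMonoid

theorem rad_natAbs (z : ℤ) : (rad z.natAbs : ℤ) = radical z := by
  rw [rad, ← Nat.radical_eq_prod_primeFactors, Int.radical_natAbs_eq_radical]

theorem radical_le_radical_of_dvd {z w : ℤ} (h : z ∣ w) (hw : w ≠ 0) : radical z ≤ radical w :=
  Int.le_of_dvd (Int.radical_pos w) (radical_dvd_radical h hw)

theorem radical_le_abs {z : ℤ} (hz : z ≠ 0) : radical z ≤ |z| :=
  Int.le_of_dvd (abs_pos.2 hz) ((dvd_abs _ _).2 radical_dvd_self)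

theorem radical_mul_le (z w : ℤ) : radical (z * w) ≤ radical z * radical w :=
  Int.le_of_dvd (mul_pos (Int.radical_pos z) (Int.radical_pos w)) radical_mul_dvd

theorem radical_pow_le (z : ℤ) (k : ℕ) : radical (z ^ k) ≤ radical z :=
  Int.le_of_dvd (Int.radical_pos z) radical_pow_dvd

theorem radical_mul_pow_le {a y : ℤ} (ha : a ≠ 0) (hy : y ≠ 0) (k : ℕ) :
    radical (a * y ^ k) ≤ |a| * |y| :=
  (radical_mul_le _ _).trans (mul_le_mul (radical_le_abs ha)
    ((radical_pow_le y k).trans (radical_le_abs hy)) (Int.radical_pos _).le (abs_nonneg a))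

theorem abs_mul_radical_mul_mul_le {u v w D : ℤ} (hu : u * D ≠ 0) (hv : v ≠ 0) (hw : w * D ≠ 0) :
    |D| * radical (u * v * w) ≤ radical (u * D) * |v * D| * radical (w * D) := by
  have hv_nonneg := (Int.radical_pos v).le
  have hw_nonneg := (Int.radical_pos w).le
  have huD_nonneg := (Int.radical_pos (u * D)).le
  calc
    |D| * radical (u * v * w) ≤ |D| * (radical u * radical v * radical w) := by
      gcongr
      exact (radical_mul_le _ _).trans (mul_le_mul_of_nonneg_right (radical_mul_le _ _) hw_nonneg)
    _ ≤ |D| * (radical (u * D) * |v| * radical (w * D)) := by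
      gcongr
      · exact radical_le_radical_of_dvd (dvd_mul_right _ _) hu
      · exact radical_le_abs hv
      · exact radical_le_radical_of_dvd (dvd_mul_right _ _) hw
    _ = radical (u * D) * |v * D| * radical (w * D) := by
      rw [abs_mul]
      ring

theorem radical_factorial (n : ℕ) : radical n ! = primorial n := by
  rw [Nat.radical_eq_prod_primeFactors, primorial_eq_prod_primesLE]
  congr 1
  ext p
  rw [Nat.mem_primeFactors_of_ne_zero n.factorial_ne_zero, Nat.mem_primesLE, and_comm]
  exact and_congr_left fun hp ↦ hp.dvd_factorial

theorem doubleFactorial_dvd_factorial : ∀ n : ℕ, n‼ ∣ n !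
  | 0 => dvd_rfl
  | n + 1 => Nat.factorial_eq_mul_doubleFactorial n ▸ dvd_mul_right _ _

theorem radical_prod_doubleFactorial_mul_pow_le {ι : Type*} {s : Finset ι} {A : ι → ℤ}
    (hA : ∀ i ∈ s, A i ≠ 0) {n : ι → ℕ} {m : ℕ} (hn : ∀ i ∈ s, n i ≤ m) :
    radical (∏ i ∈ s, ((n i)‼ : ℤ) * A i ^ n i) ≤ 4 ^ m * |∏ i ∈ s, A i| := by
  have hA' : ∏ i ∈ s, A i ≠ 0 := Finset.prod_ne_zero_iff.2 hA
  have hdvd : ∏ i ∈ s, ((n i)‼ : ℤ) * A i ^ n i ∣ (m ! : ℤ) ^ s.card * (∏ i ∈ s, A i) ^ m := by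
    rw [Finset.prod_mul_distrib, ← Finset.prod_const, ← Finset.prod_pow]
    refine mul_dvd_mul (Finset.prod_dvd_prod_of_dvd _ _ fun i hi ↦ ?_)
      (Finset.prod_dvd_prod_of_dvd _ _ fun i hi ↦ pow_dvd_pow _ (hn i hi))
    exact_mod_cast (doubleFactorial_dvd_factorial _).trans (Nat.factorial_dvd_factorial (hn i hi))
  have hm : radical (m ! : ℤ) ≤ 4 ^ m := by
    rw [Int.radical_natCast, radical_factorial]
    exact_mod_cast primorial_le_four_pow m
  calc
    radical (∏ i ∈ s, ((n i)‼ : ℤ) * A i ^ n i)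
      ≤ radical ((m ! : ℤ) ^ s.card * (∏ i ∈ s, A i) ^ m) :=
        radical_le_radical_of_dvd hdvd (by positivity)
    _ ≤ radical ((m ! : ℤ) ^ s.card) * radical ((∏ i ∈ s, A i) ^ m) := radical_mul_le _ _
    _ ≤ 4 ^ m * |∏ i ∈ s, A i| :=
        mul_le_mul ((radical_pow_le _ _).trans hm) ((radical_pow_le _ _).trans (radical_le_abs hA'))
          (Int.radical_pos _).le (by positivity)

/-- The bound asserted by the abc conjecture, for the single exponent `1 + ε`. -/
def ABCBound (ε : ℝ) : Prop :=
  ∃ K : ℝ, 0 < K ∧ ∀ A B C : ℤ, A ≠ 0 → B ≠ 0 → C ≠ 0 →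
    IsCoprime A B → IsCoprime A C → IsCoprime B C → A + B = C →
      (max (max A.natAbs B.natAbs) C.natAbs : ℝ) <
        K * (rad (A * B * C).natAbs : ℝ) ^ (1 + ε)

namespace ABCBound

theorem exists_abs_pow_le_of_isCoprime {d : ℕ} (hd : d ≠ 0) (habc : ABCBound (1 / d)) :
    ∃ K : ℝ, 0 < K ∧ ∀ u v : ℤ, u ≠ 0 → v ≠ 0 → u + v ≠ 0 → IsCoprime u v →
      |(u : ℝ)| ^ d ≤ K * (radical (u * v * (u + v)) : ℤ) ^ (d + 1) := by
  obtain ⟨K, hK, habc⟩ := habc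
  refine ⟨K ^ d, pow_pos hK d, fun u v hu hv huv hcop ↦ ?_⟩
  have hcop_left : IsCoprime u (u + v) := by
    simpa [add_comm] using hcop.add_mul_left_right 1
  have hcop_right : IsCoprime v (u + v) := by
    simpa using hcop.symm.add_mul_left_right 1
  have hmax := habc u v (u + v) hu hv huv hcop hcop_left hcop_right rfl
  set ρ : ℝ := ((rad (u * v * (u + v)).natAbs : ℕ) : ℝ) with hρ
  have hu_le : |(u : ℝ)| ≤ K * ρ ^ (1 + 1 / d : ℝ) := by
    rw [← Int.cast_abs, ← Nat.cast_natAbs]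
    exact ((le_max_left _ _).trans (le_max_left _ _)).trans hmax.le
  have hexp : (1 + 1 / d : ℝ) * d = ((d + 1 : ℕ) : ℝ) := by
    push_cast
    field_simp
  calc
    |(u : ℝ)| ^ d ≤ (K * ρ ^ (1 + 1 / d : ℝ)) ^ d := by gcongr
    _ = K ^ d * ρ ^ (d + 1) := by
      rw [mul_pow, ← Real.rpow_mul_natCast (by positivity), hexp, Real.rpow_natCast]
    _ = K ^ d * (radical (u * v * (u + v)) : ℤ) ^ (d + 1) := by
      rw [hρ, ← rad_natAbs, Int.cast_natCast]

-- Divide `U` and `V` by their gcd `D`: since `D ^ d ≤ D ^ (d + 1)`, the lost factor can be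
-- absorbed into `|V|`.
theorem exists_abs_pow_le {d : ℕ} (hd : d ≠ 0) (habc : ABCBound (1 / d)) :
    ∃ K : ℝ, 0 < K ∧ ∀ U V : ℤ, U ≠ 0 → V ≠ 0 → U + V ≠ 0 →
      |(U : ℝ)| ^ d ≤ K * (radical U * |V| * radical (U + V) : ℤ) ^ (d + 1) := by
  obtain ⟨K, hK, habc⟩ := exists_abs_pow_le_of_isCoprime hd habc
  refine ⟨K, hK, fun U V hU hV hUV ↦ ?_⟩
  obtain ⟨D, u, v, hD, hcop, rfl, rfl⟩ := Int.exists_gcd_one' (Int.gcd_pos_of_ne_zero_left V hU)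
  rw [← add_mul] at hUV ⊢
  have hu := left_ne_zero_of_mul hU
  have hv := left_ne_zero_of_mul hV
  have huv := left_ne_zero_of_mul hUV
  have hradical : D * radical (u * v * (u + v)) ≤
      radical (u * D) * |v * D| * radical ((u + v) * D) := by
    simpa using abs_mul_radical_mul_mul_le hU hv hUV
  have hrad_nonneg : (0 : ℤ) ≤ radical (u * v * (u + v)) := (Int.radical_pos _).le
  calc
    |((u * D : ℤ) : ℝ)| ^ d = D ^ d * |(u : ℝ)| ^ d := by
      push_cast
      rw [abs_mul, Nat.abs_cast, mul_pow, mul_comm]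
    _ ≤ D ^ (d + 1) * (K * (radical (u * v * (u + v)) : ℤ) ^ (d + 1)) := by
      gcongr
      · exact_mod_cast hD
      · exact d.le_succ
      · exact habc u v hu hv huv (Int.isCoprime_iff_gcd_eq_one.2 hcop)
    _ = K * (D * radical (u * v * (u + v)) : ℤ) ^ (d + 1) := by
      push_cast
      ring
    _ ≤ K * (radical (u * D) * |v * D| * radical ((u + v) * D) : ℤ) ^ (d + 1) := by
      gcongr

theorem exists_abs_le_mul_radical_eval_pow_of_ne_zero {F : ℤ[X]} (hnext : F.nextCoeff = 0)
    (hlead : F.eraseLead ≠ 0) (habc : ABCBound (1 / F.natDegree)) :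
    ∃ K : ℝ, ∀ y : ℤ, y ≠ 0 → F.eraseLead.eval y ≠ 0 → F.eval y ≠ 0 →
      |(y : ℝ)| ≤ K * (radical (F.eval y) : ℤ) ^ (F.natDegree + 1) := by
  have hQdeg := natDegree_eraseLead_le_of_nextCoeff_eq_zero hnext
  obtain ⟨k, hk⟩ := Nat.exists_eq_add_of_le' (two_le_natDegree_of_nextCoeff_eraseLead hlead hnext)
  rw [hk] at habc hQdeg ⊢
  rw [Nat.add_sub_cancel] at hQdeg
  obtain ⟨K, hK, habc⟩ := habc.exists_abs_pow_le (by omega)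
  obtain ⟨c, -, hQ⟩ := exists_abs_eval_le_mul_pow F.eraseLead hQdeg
  set a := F.leadingCoeff
  have ha : a ≠ 0 := leadingCoeff_ne_zero.2 fun h ↦ hlead (by rw [h, eraseLead_zero])
  refine ⟨K * |(a : ℝ)| * c ^ (k + 3), fun y hy hQy hFy ↦ ?_⟩
  have hsum : a * y ^ (k + 2) + F.eraseLead.eval y = F.eval y :=
    hk ▸ leadingCoeff_mul_pow_add_eval_eraseLead F y
  have hlead_ne : a * y ^ (k + 2) ≠ 0 := mul_ne_zero ha (pow_ne_zero _ hy)
  have hradical : radical (a * y ^ (k + 2)) ≤ |a| * |y| := radical_mul_pow_le ha hy _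
  have hQ_le : |F.eraseLead.eval y| ≤ c * |y| ^ k := hQ y |y| le_rfl (Int.one_le_abs hy)
  have habc := habc _ _ hlead_ne hQy (by rwa [hsum])
  rw [hsum] at habc
  have hN := Int.radical_pos (F.eval y)
  have hprod : radical (a * y ^ (k + 2)) * |F.eraseLead.eval y| * radical (F.eval y) ≤
      |a| * |y| * (c * |y| ^ k) * radical (F.eval y) := by gcongr
  have hprod_nonneg :
      0 ≤ radical (a * y ^ (k + 2)) * |F.eraseLead.eval y| * radical (F.eval y) :=
    mul_nonneg (mul_nonneg (Int.radical_pos _).le (abs_nonneg _)) hN.le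
  refine le_mul_pow_of_mul_pow_pow_le (abs_pos.2 (by exact_mod_cast ha))
    (abs_pos.2 (by exact_mod_cast hy)) ?_
  calc
    (|(a : ℝ)| * |(y : ℝ)| ^ (k + 2)) ^ (k + 2) = |((a * y ^ (k + 2) : ℤ) : ℝ)| ^ (k + 2) := by
      rw [Int.cast_mul, Int.cast_pow, abs_mul, abs_pow]
    _ ≤ K * (radical (a * y ^ (k + 2)) * |F.eraseLead.eval y| * radical (F.eval y) : ℤ) ^ (k + 3) :=
      habc
    _ ≤ K * (|a| * |y| * (c * |y| ^ k) * radical (F.eval y) : ℤ) ^ (k + 3) := by gcongr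
    _ = K * (|(a : ℝ)| * |(y : ℝ)| * (c * |(y : ℝ)| ^ k) * (radical (F.eval y) : ℤ)) ^ (k + 3) := by
      push_cast
      rfl

theorem exists_abs_le_mul_radical_eval_pow {F : ℤ[X]} (hnext : F.nextCoeff = 0)
    (hlead : F.eraseLead ≠ 0) (habc : ABCBound (1 / F.natDegree)) :
    ∃ K : ℝ, 1 ≤ K ∧ ∀ y : ℤ, F.eval y ≠ 0 →
      |(y : ℝ)| ≤ K * (radical (F.eval y) : ℤ) ^ (F.natDegree + 1) := by
  obtain ⟨K, hbound⟩ := exists_abs_le_mul_radical_eval_pow_of_ne_zero hnext hlead habc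
  obtain ⟨S, hS⟩ := ((finite_setOfPred_isRoot (mul_ne_zero X_ne_zero hlead)).image
    fun y : ℤ ↦ |(y : ℝ)|).bddAbove
  refine ⟨max 1 (max K S), le_max_left _ _, fun y hFy ↦ ?_⟩
  have hrad : (1 : ℝ) ≤ (radical (F.eval y) : ℤ) := by exact_mod_cast Int.radical_pos _
  by_cases hy : y * F.eraseLead.eval y = 0
  · calc
      |(y : ℝ)| ≤ S := hS ⟨y, by simpa [IsRoot.def] using hy, rfl⟩
      _ ≤ max 1 (max K S) := by simp
      _ ≤ _ := le_mul_of_one_le_right (by positivity) (one_le_pow₀ hrad)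
  · refine (hbound y (left_ne_zero_of_mul hy) (right_ne_zero_of_mul hy) hFy).trans ?_
    gcongr
    simp

theorem exists_abs_eval_le_mul_radical_eval_pow_of_nextCoeff_eq_zero {F : ℤ[X]}
    (hnext : F.nextCoeff = 0) (hlead : F.eraseLead ≠ 0) (habc : ABCBound (1 / F.natDegree)) :
    ∃ K : ℝ, 0 < K ∧ ∀ y : ℤ, F.eval y ≠ 0 →
      |((F.eval y : ℤ) : ℝ)| ≤
        K * (radical (F.eval y) : ℤ) ^ ((F.natDegree + 1) * F.natDegree) := by
  obtain ⟨K, hK, hy⟩ := exists_abs_le_mul_radical_eval_pow hnext hlead habc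
  obtain ⟨c, hc, hF⟩ := exists_abs_eval_le_mul_pow (F.map (Int.castRingHom ℝ)) (natDegree_map_le)
  refine ⟨c * K ^ F.natDegree, by positivity, fun y hFy ↦ ?_⟩
  have hrad : (1 : ℝ) ≤ (radical (F.eval y) : ℤ) := by exact_mod_cast Int.radical_pos _
  set ρ : ℝ := ((radical (F.eval y) : ℤ) : ℝ)
  calc
    |((F.eval y : ℤ) : ℝ)| = |(F.map (Int.castRingHom ℝ)).eval (y : ℝ)| := by simp
    _ ≤ c * (K * ρ ^ (F.natDegree + 1)) ^ F.natDegree :=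
      hF _ _ (hy y hFy) (one_le_mul_of_one_le_of_one_le hK (one_le_pow₀ hrad))
    _ = c * K ^ F.natDegree * ρ ^ ((F.natDegree + 1) * F.natDegree) := by
      rw [mul_pow, ← pow_mul, mul_assoc]

variable {S : Type*} [CommRing S] [IsDomain S] [CharZero S]

theorem exists_abs_eval_le_mul_radical_eval_pow {f : ℤ[X]} (hf : f ≠ 0) {z w : S} (hzw : z ≠ w)
    (hz : aeval z f = 0) (hw : aeval w f = 0) (habc : ABCBound (1 / f.natDegree)) :
    ∃ (K : ℝ) (e : ℕ), 0 < K ∧ ∀ x : ℤ, f.eval x ≠ 0 →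
      |((f.eval x : ℤ) : ℝ)| ≤ K * (radical (f.eval x) : ℤ) ^ e := by
  have hdeg : 0 < f.natDegree :=
    natDegree_pos_of_aeval_root hf hz fun x hx ↦ by simpa using hx
  obtain ⟨K, hK, hbound⟩ := exists_abs_eval_le_mul_radical_eval_pow_of_nextCoeff_eq_zero
    (nextCoeff_tschirnhaus f) (eraseLead_tschirnhaus_ne_zero hf hzw hz hw)
    (by rwa [natDegree_tschirnhaus])
  set e := ((tschirnhaus f).natDegree + 1) * (tschirnhaus f).natDegree
  set q := (f.natDegree * f.leadingCoeff : ℤ) ^ f.natDegree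
  have hq : q ≠ 0 := by simp [q, hdeg.ne', hf]
  refine ⟨K * (radical q : ℤ) ^ e, e, by have := Int.radical_pos q; positivity, fun x hx ↦ ?_⟩
  have heval : (tschirnhaus f).eval (f.natDegree * f.leadingCoeff * x + f.nextCoeff) =
      q * f.eval x := by
    simpa [coe_aeval_eq_eval] using aeval_tschirnhaus f x
  have hbound := hbound _ (heval ▸ mul_ne_zero hq hx)
  rw [heval] at hbound
  have := (Int.radical_pos (q * f.eval x)).le
  calc
    |((f.eval x : ℤ) : ℝ)| ≤ |((q * f.eval x : ℤ) : ℝ)| := by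
      exact_mod_cast (abs_mul q _).symm ▸ le_mul_of_one_le_left (abs_nonneg _) (Int.one_le_abs hq)
    _ ≤ K * (radical (q * f.eval x) : ℤ) ^ e := hbound
    _ ≤ K * (radical q * radical (f.eval x) : ℤ) ^ e := by
      gcongr
      exact radical_mul_le _ _
    _ = K * (radical q : ℤ) ^ e * (radical (f.eval x) : ℤ) ^ e := by
      push_cast
      ring

variable {ι : Type*} [Fintype ι] {f : ℤ[X]} {z w : S} {b : ℤ} {A : ι → ℤ}

theorem exists_sup_le_of_prod_doubleFactorial_mul_pow_eq_eval (hf : f ≠ 0) (hzw : z ≠ w)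
    (hz : aeval z f = 0) (hw : aeval w f = 0) (habc : ABCBound (1 / f.natDegree)) (hb : b ≠ 0)
    (hA : ∀ i, A i ≠ 0) :
    ∃ B : ℕ, ∀ (n : ι → ℕ) (x : ℤ), b * ∏ i, ((n i)‼ : ℤ) * A i ^ n i = f.eval x →
      Finset.univ.sup n ≤ B := by
  obtain ⟨K, e, hK, hbound⟩ := habc.exists_abs_eval_le_mul_radical_eval_pow hf hzw hz hw
  set E : ℤ := radical b * |∏ i, A i|
  obtain ⟨B, hB⟩ := Filter.eventually_atTop.1
    (eventually_mul_pow_lt_doubleFactorial (K * (E : ℝ) ^ e) (4 ^ e))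
  refine ⟨B, fun n x hnx ↦ ?_⟩
  set m := Finset.univ.sup n
  have hfx : f.eval x ≠ 0 := hnx ▸ mul_ne_zero hb (Finset.prod_ne_zero_iff.2 fun i _ ↦
    mul_ne_zero (by exact_mod_cast (doubleFactorial_pos _).ne') (pow_ne_zero _ (hA i)))
  have hdvd_prod : (m‼ : ℤ) ∣ ∏ i, ((n i)‼ : ℤ) := by
    exact_mod_cast doubleFactorial_sup_dvd_prod _ n
  have hdvd : (m‼ : ℤ) ∣ f.eval x := by
    rw [← hnx, Finset.prod_mul_distrib]
    exact (hdvd_prod.mul_right _).mul_left _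
  have hradical : radical (f.eval x) ≤ E * 4 ^ m := by
    rw [← hnx]
    refine (radical_mul_le _ _).trans ?_
    rw [mul_assoc, mul_comm |_|]
    exact mul_le_mul_of_nonneg_left (radical_prod_doubleFactorial_mul_pow_le
      (fun i _ ↦ hA i) fun i hi ↦ Finset.le_sup hi) (Int.radical_pos b).le
  have hradical_nonneg := (Int.radical_pos (f.eval x)).le
  have hm : (m‼ : ℝ) ≤ K * (E : ℝ) ^ e * (4 ^ e) ^ m := by
    calc
      (m‼ : ℝ) ≤ |((f.eval x : ℤ) : ℝ)| := by
        exact_mod_cast Int.le_of_dvd (abs_pos.2 hfx) ((dvd_abs _ _).2 hdvd)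
      _ ≤ K * (radical (f.eval x) : ℤ) ^ e := hbound x hfx
      _ ≤ K * (E * 4 ^ m : ℤ) ^ e := by gcongr
      _ = K * (E : ℝ) ^ e * (4 ^ e) ^ m := by
        push_cast
        ring
  by_contra! hlt
  exact (hB m hlt.le).not_ge hm

theorem finite_prod_doubleFactorial_mul_pow_eq_eval_int (hf : f ≠ 0) (hzw : z ≠ w)
    (hz : aeval z f = 0) (hw : aeval w f = 0) (habc : ABCBound (1 / f.natDegree)) (hb : b ≠ 0)
    (hA : ∀ i, A i ≠ 0) :
    {p : (ι → ℕ) × ℤ | b * ∏ i, ((p.1 i)‼ : ℤ) * A i ^ p.1 i = f.eval p.2}.Finite := by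
  obtain ⟨B, hB⟩ :=
    habc.exists_sup_le_of_prod_doubleFactorial_mul_pow_eq_eval hf hzw hz hw hb hA
  have hdeg : 0 < f.natDegree :=
    natDegree_pos_of_aeval_root hf hz fun x hx ↦ by simpa using hx
  refine .of_finite_fibers Prod.fst ((Set.Finite.pi' fun _ ↦ Set.finite_Iic B).subset ?_)
    fun n _ ↦
      ((finite_setOf_eval_eq hdeg (b * ∏ i, ((n i)‼ : ℤ) * A i ^ n i)).image (n, ·)).subset ?_
  · rintro _ ⟨⟨n, x⟩, hnx, rfl⟩ i
    exact (Finset.le_sup (Finset.mem_univ i)).trans (hB n x hnx)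
  · rintro ⟨_, x⟩ ⟨hnx, rfl⟩
    exact ⟨x, Eq.symm hnx, rfl⟩

end ABCBound

end Radical

theorem abc_implies_finite_solutions_doubleFactorial_poly_general {f : ℚ[X]} (hf : f ≠ 0)
    (hroots : ∃ z w : ℂ, z ≠ w ∧ aeval z f = 0 ∧ aeval w f = 0)
    (habc : ABCBound (1 / f.natDegree)) {ι : Type*} [Fintype ι] {b : ℤ} (hb : b ≠ 0)
    {A : ι → ℤ} (hA : ∀ i, A i ≠ 0) :
    {p : (ι → ℕ) × ℤ |
      (b : ℚ) * ∏ i, ((p.1 i)‼ : ℚ) * (A i : ℚ) ^ p.1 i = f.eval (p.2 : ℚ)}.Finite := by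
  obtain ⟨z, w, hzw, hz, hw⟩ := hroots
  obtain ⟨m, hm, hmap⟩ := IsLocalization.integerNormalization_spec (nonZeroDivisors ℤ) f
  set g := IsLocalization.integerNormalization (nonZeroDivisors ℤ) f
  have hm0 : m ≠ 0 := nonZeroDivisors.ne_zero hm
  have hg : g ≠ 0 := (IsLocalization.integerNormalization_eq_zero_iff le_rfl f).not.2 hf
  have hdeg : g.natDegree = f.natDegree := by
    rw [← natDegree_map_eq_of_injective (algebraMap ℤ ℚ).injective_int, hmap,
      natDegree_smul _ hm0]
  have heval (x : ℤ) : ((g.eval x : ℤ) : ℚ) = m * f.eval (x : ℚ) := by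
    simpa [zsmul_eq_mul] using congr_arg (eval (x : ℚ)) hmap
  refine (ABCBound.finite_prod_doubleFactorial_mul_pow_eq_eval_int hg hzw
    (IsLocalization.integerNormalization_aeval_eq_zero _ _ hz)
    (IsLocalization.integerNormalization_aeval_eq_zero _ _ hw)
    (hdeg ▸ habc) (mul_ne_zero hm0 hb) hA).subset fun p hp ↦ ?_
  rw [Set.mem_ofPred_eq, ← @Int.cast_inj ℚ, heval, ← hp]
  push_cast
  ring

theorem abc_implies_finite_solutions_doubleFactorial_poly
    (habc : ∀ ε : ℝ, 0 < ε → ∃ K : ℝ, 0 < K ∧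
      ∀ A B C : ℤ, A ≠ 0 → B ≠ 0 → C ≠ 0 →
        IsCoprime A B → IsCoprime A C → IsCoprime B C → A + B = C →
        (max (max A.natAbs B.natAbs) C.natAbs : ℝ) <
          K * (rad (A * B * C).natAbs : ℝ) ^ (1 + ε))
    (f : Polynomial ℚ) (d : ℕ) (hd : 2 ≤ d) (hdeg : f.natDegree = d)
    (hmono : ¬ ∃ (c : ℚ) (k : ℕ), f = Polynomial.C c * Polynomial.X ^ k)
    (hroots : ∃ z w : ℂ, z ≠ w ∧ Polynomial.aeval z f = 0 ∧ Polynomial.aeval w f = 0)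
    (r : ℕ) (b : ℤ) (hb : b ≠ 0) (A : Fin r → ℕ) (hA : ∀ i, 0 < A i) :
    {p : (Fin r → ℕ) × ℤ | (∀ i, 0 < p.1 i) ∧
      (b : ℚ) * ∏ i, (((p.1 i)‼ : ℚ) * (A i : ℚ) ^ (p.1 i)) = f.eval (p.2 : ℚ)}.Finite := by
  subst hdeg
  have hf : f ≠ 0 := ne_zero_of_natDegree_gt hd
  exact (abc_implies_finite_solutions_doubleFactorial_poly_general hf hroots
    (habc _ (by positivity)) hb (A := fun i ↦ (A i : ℤ))
    fun i ↦ by exact_mod_cast (hA i).ne').subset fun p hp ↦ by simpa using hp.2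
end
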